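/- Let B ↪ C be a module-finite extension of Noetherian domains with B a unique factorization domain, C a normal domain, and Frac(B) → Frac(C) separable. Define S_{C/B} to be the set of height-one primes of B that are associated primes of the B-module Ω_{C/B}. Then S_{C/B} is a finite set, and for any height-one prime p of B with p ∉ S_{C/B}, the quotient ring C/pC is reduced. -/

import Mathlib

/-- A height-one prime of a domain: a nonzero prime ideal all of whose strictly smaller primes
are zero. -/
def IsHeightOnePrime {B : Type*} [CommRing B] (p : Ideal B) : Prop :=
  p.IsPrime ∧ p ≠ ⊥ ∧ ∀ q : Ideal B, q.IsPrime → q < p → q = ⊥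

open scoped TensorProduct nonZeroDivisors in
theorem aux_torsion {B C : Type*} [CommRing B] [IsDomain B] [IsIntegrallyClosed B]
    [CommRing C] [IsDomain C]
    [Algebra B C] [FaithfulSMul B C] [Module.Finite B C]
    (K L : Type*) [Field K] [Field L]
    [Algebra B K] [IsFractionRing B K]
    [Algebra C L] [IsFractionRing C L]
    [Algebra K L] [Algebra B L] [IsScalarTower B K L] [IsScalarTower B C L]
    [Algebra.IsSeparable K L] : Module.IsTorsion B (Ω[C⁄B]) := by
  have key : ∀ c : C, ∃ b : B, b ≠ 0 ∧ ∀ a : C, b • a • KaehlerDifferential.D B C c = 0 := by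
    intro c
    have hc : IsIntegral B c := Algebra.IsIntegral.isIntegral c
    have h1 := minpoly.isIntegrallyClosed_eq_field_fractions K L hc
    have h2 := (Algebra.IsSeparable.isSeparable K (algebraMap C L c)).aeval_derivative_ne_zero
      (minpoly.aeval K (algebraMap C L c))
    have h3 : Polynomial.aeval c (Polynomial.derivative (minpoly B c)) ≠ 0 := by
      intro h
      apply h2
      rw [h1, Polynomial.derivative_map, Polynomial.aeval_map_algebraMap,
        Polynomial.aeval_algebraMap_apply, h, map_zero]
    obtain ⟨b, hb, e, he⟩ := (Algebra.IsIntegral.isIntegral (R := B)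
      (Polynomial.aeval c (Polynomial.derivative (minpoly B c)))).isAlgebraic.exists_nonzero_dvd
      (mem_nonZeroDivisors_of_ne_zero h3)
    refine ⟨b, hb, fun a => ?_⟩
    have h4 : Polynomial.aeval c (Polynomial.derivative (minpoly B c)) •
        KaehlerDifferential.D B C c = 0 := by
      rw [← Derivation.map_aeval, minpoly.aeval, map_zero]
    rw [← algebraMap_smul C b, he, smul_smul, mul_assoc, mul_comm, mul_smul, h4, smul_zero]
  have hall : ∀ x : Ω[C⁄B], ∃ b : B, b ≠ 0 ∧ b • x = 0 := by
    intro x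
    have hx : x ∈ Submodule.span C (Set.range (KaehlerDifferential.D B C)) := by
      rw [KaehlerDifferential.span_range_derivation]; trivial
    induction hx using Submodule.closure_induction with
    | zero => exact ⟨1, one_ne_zero, by simp⟩
    | add x y _ _ hx hy =>
      obtain ⟨b, hb, h⟩ := hx
      obtain ⟨b', hb', h'⟩ := hy
      exact ⟨b * b', mul_ne_zero hb hb', by
        rw [smul_add, mul_smul, mul_smul, h', smul_comm, h]; simp⟩
    | smul_mem r x hx =>
      obtain ⟨c, rfl⟩ := hx
      obtain ⟨b, hb, h⟩ := key c
      exact ⟨b, hb, h r⟩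
  intro x
  obtain ⟨b, hb, h⟩ := hall x
  exact ⟨⟨b, mem_nonZeroDivisors_of_ne_zero hb⟩, h⟩

open scoped TensorProduct nonZeroDivisors in
theorem aux_ker {B C : Type*} [CommRing B] [CommRing C] [Algebra B C] (p : Ideal B) [p.IsPrime]
    (c : C) (h : (1 : p.ResidueField) ⊗ₜ[B] c = 0) :
    ∃ s : B, s ∉ p ∧ s • c ∈ p • (⊤ : Submodule B C) := by
  have inst := IsLocalizedModule.rTensor (R := B) (A := B ⧸ p) (nonZeroDivisors (B ⧸ p)) (N := C)
    (Algebra.linearMap (B ⧸ p) p.ResidueField)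
  have h' : TensorProduct.AlgebraTensorModule.rTensor B C
      (Algebra.linearMap (B ⧸ p) p.ResidueField) ((1 : B ⧸ p) ⊗ₜ[B] c) = 0 := by
    simpa using h
  rw [IsLocalizedModule.eq_zero_iff (nonZeroDivisors (B ⧸ p))] at h'
  obtain ⟨⟨s, hs⟩, h'⟩ := h'
  obtain ⟨s, rfl⟩ := Ideal.Quotient.mk_surjective s
  refine ⟨s, ?_, ?_⟩
  · intro hsp
    rw [Ideal.Quotient.eq_zero_iff_mem.mpr hsp] at hs
    exact zero_notMem_nonZeroDivisors hs
  · have h2 : (Ideal.Quotient.mk p s) ⊗ₜ[B] c = 0 := by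
      simpa [Submonoid.smul_def, TensorProduct.smul_tmul'] using h'
    have h3 := congrArg (TensorProduct.quotTensorEquivQuotSMul C p) h2
    rw [TensorProduct.quotTensorEquivQuotSMul_mk_tmul, map_zero,
      Submodule.Quotient.mk_eq_zero] at h3
    exact h3

open scoped TensorProduct in
theorem aux_red {B C : Type*} [CommRing B] [CommRing C] [Algebra B C] [Module.Finite B C]
    (p : Ideal B) [p.IsPrime] (s : B) (hs : s ∉ p) (hΩ : ∀ x : Ω[C⁄B], s • x = 0) :
    IsReduced (p.ResidueField ⊗[B] C) := by
  have : Algebra.FormallyUnramified p.ResidueField (p.ResidueField ⊗[B] C) := by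
    refine ⟨?_⟩
    letI : Algebra C (p.ResidueField ⊗[B] C) := Algebra.TensorProduct.rightAlgebra
    refine (KaehlerDifferential.tensorKaehlerEquivBase B p.ResidueField C
      (p.ResidueField ⊗[B] C)).symm.toEquiv.subsingleton_congr.mpr ?_
    refine subsingleton_of_forall_eq 0 fun x => ?_
    have hne : algebraMap B p.ResidueField s ≠ 0 := by
      rwa [Ne, Ideal.algebraMap_residueField_eq_zero]
    induction x with
    | zero => rfl
    | add x y hx hy => rw [hx, hy, add_zero]
    | tmul a y =>
      have : a = s • ((algebraMap B p.ResidueField s)⁻¹ * a) := by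
        rw [Algebra.smul_def, mul_inv_cancel_left₀ hne]
      rw [this, TensorProduct.smul_tmul, hΩ, TensorProduct.tmul_zero]
  exact Algebra.FormallyUnramified.isReduced_of_field p.ResidueField _

theorem aux_div {B C : Type*} [CommRing B] [IsDomain B] [IsIntegrallyClosed B]
    [CommRing C] [IsDomain C] [IsIntegrallyClosed C]
    [Algebra B C] [FaithfulSMul B C] [Module.Finite B C]
    (L : Type*) [Field L] [Algebra C L] [IsFractionRing C L] [Algebra B L] [IsScalarTower B C L]
    (π s : B) (hπ : Prime π) (hs : ¬ π ∣ s) (c d : C) (h : s • c = π • d) :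
    ∃ e : C, c = π • e := by
  have hs0 : s ≠ 0 := by rintro rfl; exact hs (dvd_zero _)
  have hc : IsIntegral B c := Algebra.IsIntegral.isIntegral c
  have hd : IsIntegral B d := Algebra.IsIntegral.isIntegral d
  have h1 : (minpoly B c).scaleRoots s = (minpoly B d).scaleRoots π := by
    rw [← IsIntegrallyClosed.minpoly_smul hs0 hc, ← IsIntegrallyClosed.minpoly_smul hπ.ne_zero hd, h]
  have hdeg : (minpoly B c).natDegree = (minpoly B d).natDegree := by
    have := congrArg Polynomial.natDegree h1
    simpa using this
  set n := (minpoly B c).natDegree with hn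
  have hdvd : ∀ i, π ^ (n - i) ∣ (minpoly B c).coeff i := by
    intro i
    have := congrArg (fun f => Polynomial.coeff f i) h1
    simp only [Polynomial.coeff_scaleRoots, ← hdeg, ← hn] at this
    refine hπ.pow_dvd_of_dvd_mul_right (b := s ^ (n - i)) _
      (fun h => hs (hπ.dvd_of_dvd_pow h)) ⟨(minpoly B d).coeff i, ?_⟩
    rw [this, mul_comm]
  choose g hg using hdvd
  have hmon := minpoly.monic hc
  let G : Polynomial B := Polynomial.X ^ n + ∑ i : Fin n, Polynomial.C (g i) * Polynomial.X ^ (i : ℕ)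
  have hlt : (∑ i : Fin n, Polynomial.C (g i) * Polynomial.X ^ (i : ℕ)).degree < (n : WithBot ℕ) :=
    Polynomial.degree_sum_fin_lt (fun i : Fin n => g i)
  have hG : G.Monic := Polynomial.monic_X_pow_add hlt
  have hGn : G.natDegree = n := by
    apply Polynomial.natDegree_eq_of_degree_eq_some
    rw [Polynomial.degree_add_eq_left_of_degree_lt (by rwa [Polynomial.degree_X_pow]),
      Polynomial.degree_X_pow]
  have hGs : G.scaleRoots π = minpoly B c := by
    ext i
    rw [Polynomial.coeff_scaleRoots, hGn]
    rcases lt_trichotomy i n with hi | hi | hi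
    · have : G.coeff i = g i := by
        simp only [G, Polynomial.coeff_add, Polynomial.coeff_X_pow, if_neg hi.ne, zero_add,
          Polynomial.finsetSum_coeff, Polynomial.coeff_C_mul]
        rw [Finset.sum_eq_single ⟨i, hi⟩]
        · simp
        · intro b _ hb
          rw [if_neg, mul_zero]
          rintro rfl
          exact hb rfl
        · simp
      rw [this, hg i, mul_comm]
    · subst hi
      have h5 : G.coeff n = 1 := by rw [← hGn]; exact hG
      have h6 : (minpoly B c).coeff n = 1 := hmon
      rw [h5, h6]; simp
    · rw [Polynomial.coeff_eq_zero_of_natDegree_lt (by omega),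
        Polynomial.coeff_eq_zero_of_natDegree_lt (p := minpoly B c) hi, zero_mul]
  have hπL : algebraMap B L π ≠ 0 := by
    rw [IsScalarTower.algebraMap_apply B C L]
    intro h
    rw [map_eq_zero_iff _ (IsFractionRing.injective C L),
      map_eq_zero_iff _ (FaithfulSMul.algebraMap_injective B C)] at h
    exact hπ.ne_zero h
  have hx : IsIntegral B (algebraMap C L c / algebraMap B L π) := by
    refine ⟨G, hG, ?_⟩
    have := Polynomial.scaleRoots_eval₂_mul (p := G) (algebraMap B L)
      (algebraMap C L c / algebraMap B L π) π
    rw [hGs, mul_div_cancel₀ _ hπL, ← Polynomial.aeval_def, Polynomial.aeval_algebraMap_apply,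
      minpoly.aeval, map_zero] at this
    exact (mul_eq_zero.mp this.symm).resolve_left (pow_ne_zero _ hπL)
  obtain ⟨e, he⟩ := IsIntegrallyClosed.isIntegral_iff.mp (hx.tower_top (A := C))
  refine ⟨e, IsFractionRing.injective C L ?_⟩
  rw [Algebra.smul_def, map_mul, he, ← IsScalarTower.algebraMap_apply, mul_div_cancel₀ _ hπL]

open scoped TensorProduct in
/-- Local Bertini theorem. Let `B ↪ C` be a module-finite extension of
Noetherian domains with `B` a UFD, `C` a normal domain and `Frac(B) → Frac(C)` separable.
Let `S_{C/B}` be the set of height-one primes of `B` that are associated primes of the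
`B`-module `Ω_{C/B}`. Then `S_{C/B}` is finite, and for any height-one prime `p ∉ S_{C/B}`,
the ring `C/pC` is reduced. -/
theorem stmt_3 {B C : Type*} [CommRing B] [IsDomain B] [IsNoetherianRing B]
    [UniqueFactorizationMonoid B]
    [CommRing C] [IsDomain C] [IsNoetherianRing C] [IsIntegrallyClosed C]
    [Algebra B C] (hinj : Function.Injective (algebraMap B C)) [Module.Finite B C]
    (K L : Type*) [Field K] [Field L]
    [Algebra B K] [IsFractionRing B K]
    [Algebra C L] [IsFractionRing C L]
    [Algebra K L] [Algebra B L] [IsScalarTower B K L] [IsScalarTower B C L]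
    [Algebra.IsSeparable K L]
    (S : Set (Ideal B))
    (hS : S = {p : Ideal B | IsHeightOnePrime p ∧ p ∈ associatedPrimes B (Ω[C⁄B])}) :
    S.Finite ∧
      ∀ p : Ideal B, IsHeightOnePrime p → p ∉ S →
        IsReduced (C ⧸ (Ideal.map (algebraMap B C) p : Ideal C)) := by
  have : FaithfulSMul B C := (faithfulSMul_iff_algebraMap_injective B C).mpr hinj
  have : Module.Finite B (Ω[C⁄B]) := Module.Finite.trans C _
  subst hS
  refine ⟨(associatedPrimes.finite B (Ω[C⁄B])).subset fun p hp => hp.2, ?_⟩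
  intro p hp hpS
  have hpA : p ∉ associatedPrimes B (Ω[C⁄B]) := fun h => hpS ⟨hp, h⟩
  obtain ⟨hprime, hbot, hmin⟩ := hp
  have htor : Module.IsTorsion B (Ω[C⁄B]) := aux_torsion K L
  -- the annihilator is not inside p
  have hann : ¬ Module.annihilator B (Ω[C⁄B]) ≤ p := by
    intro hle
    apply hpA
    apply Module.associatedPrimes.minimalPrimes_annihilator_subset_associatedPrimes B (Ω[C⁄B])
    refine ⟨⟨hprime, hle⟩, fun q hq hqp => ?_⟩
    rcases hqp.lt_or_eq with hlt | heq
    · exfalso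
      have hq0 := hmin q hq.1 hlt
      obtain ⟨b, hb, hb'⟩ := Submodule.annihilator_top_inter_nonZeroDivisors htor
      have hbq : b ∈ q := hq.2 (by simpa [Submodule.annihilator_top] using hb)
      rw [hq0, Ideal.mem_bot] at hbq
      exact nonZeroDivisors.ne_zero hb' hbq
    · exact heq.ge
  obtain ⟨t, htann, htp⟩ := SetLike.not_le_iff_exists.mp hann
  have hred := aux_red (C := C) p t htp (fun x => Module.mem_annihilator.mp htann x)
  obtain ⟨π, hπp, hπ⟩ := hprime.exists_mem_prime_of_ne_bot hbot
  have hpπ : p = Ideal.span {π} := by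
    have hle : Ideal.span {π} ≤ p := (Ideal.span_singleton_le_iff_mem _).mpr hπp
    rcases hle.lt_or_eq with hlt | heq
    · have := hmin _ ((Ideal.span_singleton_prime hπ.ne_zero).mpr hπ) hlt
      exact absurd (Ideal.span_singleton_eq_bot.mp this) hπ.ne_zero
    · exact heq.symm
  have hmap : ∀ x : C, x ∈ Ideal.map (algebraMap B C) p ↔ ∃ e : C, x = π • e := by
    intro x
    rw [hpπ, Ideal.map_span, Set.image_singleton, Ideal.mem_span_singleton]
    simp only [Dvd.dvd, Algebra.smul_def]
  refine ⟨fun x hx => ?_⟩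
  obtain ⟨c, rfl⟩ := Ideal.Quotient.mk_surjective x
  obtain ⟨n, hn⟩ := hx
  rw [← map_pow, Ideal.Quotient.eq_zero_iff_mem, hmap] at hn
  obtain ⟨e, he⟩ := hn
  rw [Ideal.Quotient.eq_zero_iff_mem, hmap]
  have hz : (1 : p.ResidueField) ⊗ₜ[B] c = 0 := by
    apply hred.eq_zero
    refine ⟨n, ?_⟩
    rw [Algebra.TensorProduct.tmul_pow, he, one_pow, ← TensorProduct.smul_tmul, Algebra.smul_def,
      Ideal.algebraMap_residueField_eq_zero.mpr hπp, zero_mul, TensorProduct.zero_tmul]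
  obtain ⟨s, hs, hsc⟩ := aux_ker p c hz
  have hsc' : s • c ∈ Ideal.map (algebraMap B C) p := by
    rw [Ideal.smul_top_eq_map] at hsc
    exact hsc
  obtain ⟨d, hd⟩ := (hmap _).mp hsc'
  refine aux_div L π s hπ (fun h => hs ?_) c d hd
  rw [hpπ]
  exact Ideal.mem_span_singleton.mpr h
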